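/- For a skew-symmetric 2n×2n matrix A = (a_{ij}) over ℝ, the Pfaffian admits the Grassmann integral representation Pf(A) = ∫ exp((1/2) Σ_{i,j} φ_i a_{ij} φ_j) dφ, i.e., Pf(A) equals the coefficient of φ₁∧⋯∧φ_{2n} in the exponential (computed in the exterior algebra on generators φ₁,…,φ_{2n}) of the element (1/2) Σ_{i,j} a_{ij} φ_i∧φ_j. -/

import Mathlib

/-- The Pfaffian of a real `2n × 2n` matrix. -/
noncomputable def pfaffianR (n : ℕ) (A : Matrix (Fin (2 * n)) (Fin (2 * n)) ℝ) : ℝ :=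
  (1 / (2 ^ n * n.factorial) : ℝ) *
    ∑ σ : Equiv.Perm (Fin (2 * n)), ((Equiv.Perm.sign σ : ℤ) : ℝ) *
      ∏ k : Fin n, A (σ ⟨2 * k.1, by have := k.2; omega⟩)
        (σ ⟨2 * k.1 + 1, by have := k.2; omega⟩)

/-- The Grassmann generators `φ_i` in the exterior algebra on `ℝ^{2n}`. -/
noncomputable def φ (n : ℕ) (i : Fin (2 * n)) :
    ExteriorAlgebra ℝ (Fin (2 * n) → ℝ) :=
  ExteriorAlgebra.ι ℝ (Pi.single i 1)

/-!
Expanding `(∑ i j, a_{ij} v_i v_j) ^ n` gives one term for every word `h` of length `2n` in the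
indices, with coefficient `∏ k, a_{h(2k) h(2k+1)}` and monomial `v_{h(0)} ⋯ v_{h(2n-1)}`. In the
exterior algebra the monomial is alternating in its letters, so only the words that are
permutations `σ` survive, and sorting the letters costs `sign σ`.
-/

open Equiv.Perm (sign)

/-- The first element of the `k`-th pair when `Fin (2 * n)` is cut into `n` consecutive pairs. -/
def pairFst {n : ℕ} (k : Fin n) : Fin (2 * n) := ⟨2 * k, by lia⟩

/-- The second element of the `k`-th pair when `Fin (2 * n)` is cut into `n` consecutive pairs. -/
def pairSnd {n : ℕ} (k : Fin n) : Fin (2 * n) := ⟨2 * k + 1, by lia⟩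

/-- Reading a word of even length as a word of consecutive pairs of letters. -/
def wordPairEquiv (n : ℕ) (I : Type*) : (Fin (2 * n) → I) ≃ (Fin n → I × I) where
  toFun h k := (h (pairFst k), h (pairSnd k))
  invFun f i := if i.1 % 2 = 0 then (f ⟨i / 2, by lia⟩).1 else (f ⟨i / 2, by lia⟩).2
  left_inv h := by
    ext i
    rcases Nat.mod_two_eq_zero_or_one i with hi | hi
    · have : pairFst ⟨i / 2, by lia⟩ = i := Fin.ext (by simp only [pairFst]; lia)
      simp [hi, this]
    · have : pairSnd ⟨i / 2, by lia⟩ = i := Fin.ext (by simp only [pairSnd]; lia)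
      simp [hi, this]
  right_inv f := by
    ext k
    · simp [pairFst]
    · simp [pairSnd, Nat.mul_add_div]

theorem prod_ofFn_pairFst_mul_pairSnd {S : Type*} [Monoid S] {n : ℕ} (x : Fin (2 * n) → S) :
    (List.ofFn fun k : Fin n ↦ x (pairFst k) * x (pairSnd k)).prod = (List.ofFn x).prod := by
  rw [List.ofFn_mul', List.prod_flatten, List.map_ofFn]
  simp [pairFst, pairSnd, Function.comp_def, List.ofFn_succ]

section Expansion

variable {R S I : Type*} [CommSemiring R] [Semiring S] [Algebra R S] [Fintype I]

theorem sum_smul_pow (n : ℕ) (a : I → R) (x : I → S) :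
    (∑ i, a i • x i) ^ n =
      ∑ f : Fin n → I, (∏ k, a (f k)) • (List.ofFn fun k ↦ x (f k)).prod := by
  have expand := (MultilinearMap.mkPiAlgebraFin R n S).map_sum fun _ i ↦ a i • x i
  simpa only [MultilinearMap.map_smul_univ, MultilinearMap.mkPiAlgebraFin_apply,
    List.ofFn_const, List.prod_replicate] using expand

theorem sum_smul_mul_pow (n : ℕ) (A : Matrix I I R) (x : I → S) :
    (∑ i, ∑ j, A i j • (x i * x j)) ^ n =
      ∑ h : Fin (2 * n) → I,
        (∏ k, A (h (pairFst k)) (h (pairSnd k))) • (List.ofFn fun l ↦ x (h l)).prod := by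
  rw [← Fintype.sum_prod_type' fun i j ↦ A i j • (x i * x j),
    sum_smul_pow n (fun p : I × I ↦ A p.1 p.2) fun p ↦ x p.1 * x p.2]
  refine (Fintype.sum_equiv (wordPairEquiv n I) _ _ fun h ↦ ?_).symm
  rw [← prod_ofFn_pairFst_mul_pairSnd]
  rfl

end Expansion

section Alternating

variable {R M : Type*} [CommRing R] [AddCommGroup M] [Module R M]

theorem sum_smul_alternatingMap_comp {N I : Type*} [AddCommGroup N] [Module R N] [Fintype I]
    [DecidableEq I] (f : M [⋀^I]→ₗ[R] N) (v : I → M) (c : (I → I) → R) :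
    ∑ h : I → I, c h • f (v ∘ h) = (∑ σ : Equiv.Perm I, ((sign σ : ℤ) : R) * c σ) • f v := by
  rw [Finset.sum_smul]
  symm
  refine Fintype.sum_of_injective (fun σ : Equiv.Perm I ↦ ⇑σ) DFunLike.coe_injective _ _ ?_ ?_
  · intro h h_not_perm
    have h_not_inj : ¬ Function.Injective h := fun h_inj ↦
      h_not_perm ⟨.ofBijective h (Finite.injective_iff_bijective.mp h_inj), rfl⟩
    rw [f.map_eq_zero_of_not_injective _ fun hv ↦ h_not_inj hv.of_comp, smul_zero]
  · intro σ
    rw [f.map_perm, Units.smul_def, mul_comm, mul_smul, Int.cast_smul_eq_zsmul]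

/-- The signed sum over all permutations whose value on a skew-symmetric matrix is
`2 ^ n * n!` times the Pfaffian: each perfect matching is counted once for every ordering of its
`n` edges and of the two ends of each edge. -/
def pfaffianSum {n : ℕ} (A : Matrix (Fin (2 * n)) (Fin (2 * n)) R) : R :=
  ∑ σ : Equiv.Perm (Fin (2 * n)), ((sign σ : ℤ) : R) * ∏ k, A (σ (pairFst k)) (σ (pairSnd k))

/-- The Pfaffian of a `2n × 2n` matrix, as a normalised signed sum over permutations. On a matrix
that is not skew-symmetric this is the Pfaffian of its skew-symmetric part. -/
def pfaffian {n : ℕ} [Invertible (2 : R)] [Invertible (n.factorial : R)]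
    (A : Matrix (Fin (2 * n)) (Fin (2 * n)) R) : R :=
  ⅟(n.factorial : R) * ⅟(2 : R) ^ n * pfaffianSum A

theorem sum_smul_ι_mul_ι_pow {n : ℕ} (A : Matrix (Fin (2 * n)) (Fin (2 * n)) R)
    (v : Fin (2 * n) → M) :
    (∑ i, ∑ j, A i j • (ExteriorAlgebra.ι R (v i) * ExteriorAlgebra.ι R (v j))) ^ n =
      pfaffianSum A • (List.ofFn fun i ↦ ExteriorAlgebra.ι R (v i)).prod := by
  rw [sum_smul_mul_pow n A fun i ↦ ExteriorAlgebra.ι R (v i)]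
  simpa only [pfaffianSum, ExteriorAlgebra.ιMulti_apply, Function.comp_apply] using
    sum_smul_alternatingMap_comp (ExteriorAlgebra.ιMulti R (2 * n)) v
      fun h ↦ ∏ k, A (h (pairFst k)) (h (pairSnd k))

theorem pfaffian_berezin_integral_general {n : ℕ} [Invertible (2 : R)]
    [Invertible (n.factorial : R)] (A : Matrix (Fin (2 * n)) (Fin (2 * n)) R)
    (v : Fin (2 * n) → M) :
    ⅟(n.factorial : R) • (⅟(2 : R) • ∑ i, ∑ j,
        A i j • (ExteriorAlgebra.ι R (v i) * ExteriorAlgebra.ι R (v j))) ^ n =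
      pfaffian A • (List.ofFn fun i ↦ ExteriorAlgebra.ι R (v i)).prod := by
  rw [smul_pow, sum_smul_ι_mul_ι_pow, smul_smul, smul_smul, pfaffian]

end Alternating

theorem pfaffian_eq_pfaffianR {n : ℕ} [Invertible (2 : ℝ)] [Invertible (n.factorial : ℝ)]
    (A : Matrix (Fin (2 * n)) (Fin (2 * n)) ℝ) : pfaffian A = pfaffianR n A := by
  have normalization : ⅟(n.factorial : ℝ) * ⅟(2 : ℝ) ^ n = 1 / (2 ^ n * n.factorial) := by
    simp only [invOf_eq_inv, one_div, mul_inv_rev, inv_pow]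
  rw [pfaffian, normalization]
  rfl

/-- Grassmann (Berezin) integral representation of the Pfaffian: for a
skew-symmetric `2n × 2n` real matrix `A` and
`ω = (1/2) Σ_{i,j} a_{ij} φ_i φ_j` in the Grassmann algebra generated by
`φ₁, …, φ_{2n}`, the top-degree term `ω^n / n!` of `exp(ω)` equals
`Pf(A) · φ₁⋯φ_{2n}`; that is, `∫ exp((1/2) Σ φ_i a_{ij} φ_j) dφ = Pf(A)`. -/
theorem pfaffian_berezin_integral (n : ℕ)
    (A : Matrix (Fin (2 * n)) (Fin (2 * n)) ℝ) (hA : A.transpose = -A) :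
    ((n.factorial : ℝ)⁻¹) •
        ((2⁻¹ : ℝ) • ∑ i : Fin (2 * n), ∑ j : Fin (2 * n),
            A i j • (φ n i * φ n j)) ^ n =
      pfaffianR n A • (List.ofFn (φ n)).prod := by
  let : Invertible (n.factorial : ℝ) := invertibleOfNonzero (by positivity)
  rw [← pfaffian_eq_pfaffianR, ← invOf_eq_inv, ← invOf_eq_inv]
  exact pfaffian_berezin_integral_general A fun i ↦ Pi.single i 1
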